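/- Let α ≥ 12 be an even integer, let s_α > 0 be a minimizer of t ↦ Σ_{n∈ℤ} t·f_α(t n) over t > 0, and set F_α(x) = 1/(1 + s_α^α x^α). Define ℛ : ℝ → ℝ by ℛ(x) = (sin x − x + x³/6)/x³ for x ≠ 0 and ℛ(0) = 0. Then Σ_{n∈ℤ} n³·F_α′(n)·(−2/3 + 4ℛ(πn)) − Σ_{n∈ℤ} 2n²·F_α(n) ≥ 0, where F_α′ denotes the derivative of F_α. -/

import Mathlib

/-- The lattice energy `t ↦ Σ_{n∈ℤ} t·f_α(t n)` with `f_α(x) = 1/(1+x^α)`. -/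
noncomputable def latticeEnergy (α : ℕ) (t : ℝ) : ℝ :=
  ∑' n : ℤ, t * (1 / (1 + (t * (n : ℝ)) ^ α))

/-- `ℛ(x) = (sin x − x + x³/6)/x³` for `x ≠ 0`, `ℛ(0) = 0`. -/
noncomputable def Rfun (x : ℝ) : ℝ :=
  if x = 0 then 0 else (Real.sin x - x + x ^ 3 / 6) / x ^ 3

lemma aux_even {f : ℤ → ℝ} {g : ℕ → ℝ} (h1 : ∀ k : ℕ, f (k + 1) = g k)
    (h2 : ∀ k : ℕ, f (-(k + 1)) = g k) (hg : Summable g) :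
    ∑' n : ℤ, f n = f 0 + 2 * ∑' k : ℕ, g k := by
  have a : HasSum (fun k : ℕ => f (k + 1)) (∑' k, g k) := by
    simpa only [h1] using hg.hasSum
  have b : HasSum (fun k : ℕ => f (-(k + 1))) (∑' k, g k) := by
    simpa only [h2] using hg.hasSum
  rw [(HasSum.of_add_one_of_neg_add_one a b).tsum_eq]
  ring

lemma aux_zeta : HasSum (fun k : ℕ => 1 / ((k : ℝ) + 1) ^ 2) (Real.pi ^ 2 / 6) := by
  have := (hasSum_nat_add_iff' 1).2 hasSum_zeta_two
  simpa using this

/-- bound on sums dominated by a first term and a multiple of zeta two -/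
lemma aux_bound {g : ℕ → ℝ} (A B : ℝ) (hg0 : ∀ k, 0 ≤ g k)
    (hg : ∀ k : ℕ, g k ≤ (if k = 0 then A else 0) + B * (1 / ((k : ℝ) + 1) ^ 2)) :
    Summable g ∧ ∑' k, g k ≤ A + B * (Real.pi ^ 2 / 6) := by
  have h1 : HasSum (fun k : ℕ => (if k = 0 then A else 0) + B * (1 / ((k : ℝ) + 1) ^ 2))
      (A + B * (Real.pi ^ 2 / 6)) :=
    (hasSum_ite_eq 0 A).add (aux_zeta.mul_left B)
  have h2 : Summable g := Summable.of_nonneg_of_le hg0 hg h1.summable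
  exact ⟨h2, hasSum_le hg h2.hasSum h1⟩

lemma pi_sq_lt : Real.pi ^ 2 < 9.87 := by
  have := Real.pi_lt_d4
  have := Real.pi_pos
  nlinarith

/-- crude summability -/
lemma aux_summable {α : ℕ} (hα12 : 12 ≤ α) {t : ℝ} (ht : 0 < t) (c : ℝ) (hc : 0 ≤ c) (j : ℕ)
    (hj : j ≤ 2) :
    Summable (fun k : ℕ => c * ((k : ℝ) + 1) ^ j / (1 + (t * ((k : ℝ) + 1)) ^ α)) := by
  refine (aux_bound 0 (c / t ^ α) (fun k => by positivity) (fun k => ?_)).1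
  have hk : (1 : ℝ) ≤ (k : ℝ) + 1 := by linarith [(Nat.cast_nonneg k : (0 : ℝ) ≤ k)]
  have h0 : (0 : ℝ) < (k : ℝ) + 1 := by linarith
  have e : ((k : ℝ) + 1) ^ j * ((k : ℝ) + 1) ^ 2 ≤ ((k : ℝ) + 1) ^ α := by
    rw [← pow_add]; exact pow_le_pow_right₀ hk (by omega)
  have : (0 : ℝ) + c / t ^ α * (1 / ((k : ℝ) + 1) ^ 2) = c / (t ^ α * ((k : ℝ) + 1) ^ 2) := by
    field_simp; ring
  have hif : (if k = 0 then (0 : ℝ) else 0) = 0 := by simp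
  rw [hif, this, div_le_div_iff₀ (by positivity) (by positivity), mul_pow, mul_assoc]
  refine mul_le_mul_of_nonneg_left ?_ hc
  have : t ^ α * (((k : ℝ) + 1) ^ j * ((k : ℝ) + 1) ^ 2) ≤ t ^ α * ((k : ℝ) + 1) ^ α := by
    gcongr
  linarith

lemma energy_eq {α : ℕ} (hα : Even α) (hα12 : 12 ≤ α) {t : ℝ} (ht : 0 < t) :
    latticeEnergy α t = t + 2 * ∑' k : ℕ, t / (1 + (t * ((k : ℝ) + 1)) ^ α) := by
  unfold latticeEnergy
  rw [aux_even (g := fun k : ℕ => t / (1 + (t * ((k : ℝ) + 1)) ^ α))]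
  · have : α ≠ 0 := by omega
    simp [this]
  · intro k; push_cast; ring
  · intro k; push_cast
    rw [mul_neg, hα.neg_pow]; ring
  · simpa using aux_summable hα12 ht t ht.le 0 (by norm_num)

lemma energy_ge {α : ℕ} (hα : Even α) (hα12 : 12 ≤ α) {t : ℝ} (ht : 0 < t) (N : ℕ) :
    t + 2 * ∑ k ∈ Finset.range N, t / (1 + (t * ((k : ℝ) + 1)) ^ α) ≤ latticeEnergy α t := by
  rw [energy_eq hα hα12 ht]
  have h : Summable (fun k : ℕ => t / (1 + (t * ((k : ℝ) + 1)) ^ α)) := by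
    simpa using aux_summable hα12 ht t ht.le 0 (by norm_num)
  have := h.sum_le_tsum (Finset.range N) (fun k _ => by positivity)
  linarith

lemma energy_four_thirds {α : ℕ} (hα : Even α) (hα12 : 12 ≤ α) :
    latticeEnergy α (4 / 3) ≤ 1.42 := by
  rw [energy_eq hα hα12 (by norm_num)]
  have h := (aux_bound (g := fun k : ℕ => (4 / 3 : ℝ) / (1 + (4 / 3 * ((k : ℝ) + 1)) ^ α))
    (4 / 3 / 31.5) (4 / 3 / 31.5 / 1024) (fun k => by positivity) (fun k => ?_)).2
  · have := pi_sq_lt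
    norm_num at *
    linarith
  · have hk : (1 : ℝ) ≤ (k : ℝ) + 1 := by linarith [(Nat.cast_nonneg k : (0 : ℝ) ≤ k)]
    have h1 : (4 / 3 * ((k : ℝ) + 1)) ^ 12 ≤ (4 / 3 * ((k : ℝ) + 1)) ^ α :=
      pow_le_pow_right₀ (by linarith) hα12
    have h2 : (31.5 : ℝ) * ((k : ℝ) + 1) ^ 12 ≤ (4 / 3 * ((k : ℝ) + 1)) ^ 12 := by
      rw [mul_pow]; gcongr; norm_num
    have h3 : (4 / 3 : ℝ) / (1 + (4 / 3 * ((k : ℝ) + 1)) ^ α)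
        ≤ 4 / 3 / (31.5 * ((k : ℝ) + 1) ^ 12) := by
      gcongr; linarith
    refine h3.trans ?_
    by_cases hk0 : k = 0
    · subst hk0; norm_num
    · rw [if_neg hk0]
      have hk2 : (2 : ℝ) ≤ (k : ℝ) + 1 := by
        have : 1 ≤ k := by omega
        have : (1 : ℝ) ≤ k := by exact_mod_cast this
        linarith
      have h4 : (1024 : ℝ) * ((k : ℝ) + 1) ^ 2 ≤ ((k : ℝ) + 1) ^ 12 := by
        have : (2 : ℝ) ^ 10 ≤ ((k : ℝ) + 1) ^ 10 := by gcongr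
        calc (1024 : ℝ) * ((k : ℝ) + 1) ^ 2 = 2 ^ 10 * ((k : ℝ) + 1) ^ 2 := by norm_num
          _ ≤ ((k : ℝ) + 1) ^ 10 * ((k : ℝ) + 1) ^ 2 := by gcongr
          _ = _ := by ring
      calc (4 / 3 : ℝ) / (31.5 * ((k : ℝ) + 1) ^ 12)
          ≤ 4 / 3 / (31.5 * (1024 * ((k : ℝ) + 1) ^ 2)) := by gcongr
        _ = _ := by field_simp; ring

lemma f_ge_half {α : ℕ} {x t : ℝ} (ht : 0 < t) (hx : 0 ≤ x) (hx1 : x ≤ 1) :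
    t * 0.5 ≤ t / (1 + x ^ α) := by
  have : x ^ α ≤ 1 := pow_le_one₀ hx hx1
  have h0 : 0 ≤ x ^ α := pow_nonneg hx _
  rw [le_div_iff₀ (by positivity)]
  nlinarith

lemma f_ge_q {α : ℕ} (hα12 : 12 ≤ α) {x t : ℝ} (ht : 0 < t) (hx : 0 ≤ x) (hx1 : x ≤ 0.8) :
    t * 0.935 ≤ t / (1 + x ^ α) := by
  have h1 : x ^ α ≤ x ^ 12 := pow_le_pow_of_le_one hx (by linarith) hα12
  have h2 : x ^ 12 ≤ (0.8 : ℝ) ^ 12 := by gcongr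
  have h3 : (0.8 : ℝ) ^ 12 ≤ 0.069 := by norm_num
  have h0 : 0 ≤ x ^ α := pow_nonneg hx _
  rw [le_div_iff₀ (by positivity)]
  nlinarith

lemma energy_small {α : ℕ} (hα : Even α) (hα12 : 12 ≤ α) {s : ℝ} (hs : 0 < s) (hs1 : s < 1) :
    1.42 < latticeEnergy α s := by
  rcases le_or_gt 0.8 s with h | h
  · have := energy_ge hα hα12 hs 1
    have h2 := f_ge_half (α := α) (x := s * ((0 : ℕ) + 1)) hs (by positivity) (by simpa using hs1.le)
    rw [Finset.sum_range_one] at this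
    norm_num at *
    linarith
  rcases le_or_gt 0.5 s with h' | h'
  · have := energy_ge hα hα12 hs 1
    have h2 := f_ge_q (α := α) hα12 (x := s * ((0 : ℕ) + 1)) hs (by positivity) (by simpa using h.le)
    rw [Finset.sum_range_one] at this
    norm_num at *
    linarith
  rcases le_or_gt 0.4 s with h'' | h''
  · have := energy_ge hα hα12 hs 2
    have h2 := f_ge_q (α := α) hα12 (x := s * ((0 : ℕ) + 1)) hs (by positivity) (by simpa using h.le)
    have h3 := f_ge_half (α := α) (x := s * ((1 : ℕ) + 1)) hs (by positivity)
      (by norm_num at *; linarith)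
    rw [Finset.sum_range_succ, Finset.sum_range_one] at this
    norm_num at *
    linarith
  rcases le_or_gt 0.31 s with h3 | h3
  · have := energy_ge hα hα12 hs 2
    have h2 := f_ge_q (α := α) hα12 (x := s * ((0 : ℕ) + 1)) hs (by positivity) (by simpa using h.le)
    have h3 := f_ge_q (α := α) hα12 (x := s * ((1 : ℕ) + 1)) hs (by positivity)
      (by norm_num at *; linarith)
    rw [Finset.sum_range_succ, Finset.sum_range_one] at this
    norm_num at *
    linarith
  · set Q := ⌊0.8 / s⌋₊ with hQ
    set N := ⌊1 / s⌋₊ with hN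
    have hQN : Q ≤ N := Nat.floor_mono (by gcongr; norm_num)
    have q1 : (Q : ℝ) * s ≤ 0.8 := by
      rw [← le_div_iff₀ hs]; exact Nat.floor_le (by positivity)
    have n1 : (N : ℝ) * s ≤ 1 := by
      rw [← le_div_iff₀ hs]; exact Nat.floor_le (by positivity)
    have q2 : 0.8 < ((Q : ℝ) + 1) * s := by
      rw [← div_lt_iff₀ hs]; exact Nat.lt_floor_add_one _
    have n2 : 1 < ((N : ℝ) + 1) * s := by
      rw [← div_lt_iff₀ hs]; exact Nat.lt_floor_add_one _
    obtain ⟨m, hm⟩ := Nat.exists_eq_add_of_le hQN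
    have := energy_ge hα hα12 hs N
    rw [hm, Finset.sum_range_add] at this
    have A : (Q : ℝ) * (s * 0.935) ≤ ∑ k ∈ Finset.range Q, s / (1 + (s * ((k : ℝ) + 1)) ^ α) := by
      have := Finset.card_nsmul_le_sum (Finset.range Q)
        (fun k : ℕ => s / (1 + (s * ((k : ℝ) + 1)) ^ α)) (s * 0.935) (fun k hk => ?_)
      · simpa using this
      · refine f_ge_q hα12 hs (by positivity) ?_
        have : k + 1 ≤ Q := Finset.mem_range.1 hk
        have : (k : ℝ) + 1 ≤ Q := by exact_mod_cast this
        nlinarith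
    have B : (m : ℝ) * (s * 0.5)
        ≤ ∑ k ∈ Finset.range m, s / (1 + (s * (((Q + k : ℕ) : ℝ) + 1)) ^ α) := by
      have := Finset.card_nsmul_le_sum (Finset.range m)
        (fun k : ℕ => s / (1 + (s * (((Q + k : ℕ) : ℝ) + 1)) ^ α)) (s * 0.5) (fun k hk => ?_)
      · simpa using this
      · refine f_ge_half hs (by positivity) ?_
        have : Q + k + 1 ≤ N := by have := Finset.mem_range.1 hk; omega
        have : ((Q + k : ℕ) : ℝ) + 1 ≤ N := by exact_mod_cast this
        nlinarith
    have hm' : (N : ℝ) = Q + m := by exact_mod_cast hm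
    rw [hm'] at n2
    norm_num at *
    nlinarith

lemma Rfun_int (x : ℝ) (hx : x ≠ 0) (hsin : Real.sin (Real.pi * x) = 0) :
    -(2 / 3) + 4 * Rfun (Real.pi * x) = - (4 / (Real.pi ^ 2 * x ^ 2)) := by
  have hp := Real.pi_ne_zero
  unfold Rfun
  rw [if_neg (mul_ne_zero hp hx), hsin]
  field_simp
  ring

lemma derivF {α : ℕ} (hα : Even α) {s : ℝ} {F : ℝ → ℝ}
    (hF : ∀ x, F x = 1 / (1 + s ^ α * x ^ α)) (x : ℝ) :
    deriv F x = - (α * s ^ α * x ^ (α - 1)) / (1 + s ^ α * x ^ α) ^ 2 := by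
  have hF' : F = fun x => (1 + s ^ α * x ^ α)⁻¹ := by
    funext x; rw [hF, one_div]
  have hpos : 0 < 1 + s ^ α * x ^ α := by
    have := hα.pow_nonneg s
    have := hα.pow_nonneg x
    positivity
  have h := (((hasDerivAt_pow α x).const_mul (s ^ α)).const_add 1).inv hpos.ne'
  rw [hF']
  refine Eq.trans h.deriv ?_
  ring

lemma u_term {α : ℕ} (hα : Even α) (hα12 : 12 ≤ α) {s : ℝ} {F : ℝ → ℝ}
    (hF : ∀ x, F x = 1 / (1 + s ^ α * x ^ α)) (x : ℝ) (hx : x ≠ 0)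
    (hsin : Real.sin (Real.pi * x) = 0) :
    x ^ 3 * deriv F x * (-(2 / 3) + 4 * Rfun (Real.pi * x)) =
      4 * α / Real.pi ^ 2 * ((s * x) ^ α / (1 + (s * x) ^ α) ^ 2) := by
  have hp := Real.pi_ne_zero
  have hpos : 0 < 1 + s ^ α * x ^ α := by
    have := hα.pow_nonneg s
    have := hα.pow_nonneg x
    positivity
  rw [Rfun_int x hx hsin, derivF hα hF, mul_pow]
  obtain ⟨b, rfl⟩ : ∃ b, α = b + 1 := ⟨α - 1, by omega⟩
  simp only [Nat.add_sub_cancel]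
  have := hpos.ne'
  field_simp
  ring

/-- For `α ≥ 12`,
`Σ_{n∈ℤ} n³·F_α′(n)·(−2/3 + 4ℛ(πn)) − Σ_{n∈ℤ} 2n²·F_α(n) ≥ 0`. -/
theorem statement18 (α : ℕ) (hα : Even α) (hα12 : 12 ≤ α) (s : ℝ) (hs : 0 < s)
    (hmin : ∀ t : ℝ, 0 < t → latticeEnergy α s ≤ latticeEnergy α t)
    (F : ℝ → ℝ) (hF : ∀ x, F x = 1 / (1 + s ^ α * x ^ α)) :
    0 ≤ (∑' n : ℤ, (n : ℝ) ^ 3 * deriv F n * (-(2 / 3) + 4 * Rfun (Real.pi * n)))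
        - ∑' n : ℤ, 2 * (n : ℝ) ^ 2 * F n := by
  have hs1 : 1 ≤ s := by
    by_contra hlt
    push Not at hlt
    have h1 := energy_small hα hα12 hs hlt
    have h2 := energy_four_thirds hα hα12
    have h3 := hmin (4 / 3) (by norm_num)
    linarith
  have hsα : 1 ≤ s ^ α := one_le_pow₀ hs1
  have hpi := Real.pi_pos
  have hpi2 := pi_sq_lt
  have hαR : (12 : ℝ) ≤ α := by exact_mod_cast hα12
  have hsin : ∀ k : ℕ, Real.sin (Real.pi * ((k : ℝ) + 1)) = 0 := fun k => by
    have := Real.sin_nat_mul_pi (k + 1)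
    push_cast at this
    rwa [mul_comm] at this
  have hsin' : ∀ k : ℕ, Real.sin (Real.pi * (-((k : ℝ) + 1))) = 0 := fun k => by
    rw [mul_neg, Real.sin_neg, hsin, neg_zero]
  have hUs : Summable (fun k : ℕ => 4 * α / Real.pi ^ 2 *
      ((s * ((k : ℝ) + 1)) ^ α / (1 + (s * ((k : ℝ) + 1)) ^ α) ^ 2)) := by
    refine Summable.of_nonneg_of_le (fun k => by positivity) (fun k => ?_)
      (aux_summable hα12 hs (4 * α / Real.pi ^ 2) (by positivity) 0 (by norm_num))
    have hy : 0 ≤ (s * ((k : ℝ) + 1)) ^ α := by positivity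
    rw [pow_zero, mul_one, div_eq_mul_one_div (4 * α / Real.pi ^ 2)]
    refine mul_le_mul_of_nonneg_left ?_ (by positivity)
    rw [div_le_div_iff₀ (by positivity) (by positivity)]
    nlinarith
  have hVs : Summable (fun k : ℕ => 2 * ((k : ℝ) + 1) ^ 2 / (1 + (s * ((k : ℝ) + 1)) ^ α)) :=
    aux_summable hα12 hs 2 (by norm_num) 2 le_rfl
  rw [aux_even (f := fun n : ℤ => (n : ℝ) ^ 3 * deriv F n * (-(2 / 3) + 4 * Rfun (Real.pi * n)))
    (fun k => ?_) (fun k => ?_) hUs,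
    aux_even (f := fun n : ℤ => 2 * (n : ℝ) ^ 2 * F n) (fun k => ?_) (fun k => ?_) hVs]
  · have hU := hUs.sum_le_tsum (Finset.range 1) (fun k _ => by positivity)
    rw [Finset.sum_range_one] at hU
    have hV := (aux_bound (g := fun k : ℕ => 2 * ((k : ℝ) + 1) ^ 2 / (1 + (s * ((k : ℝ) + 1)) ^ α))
      (2 / (1 + s ^ α)) (1 / 64 / (1 + s ^ α)) (fun k => by positivity) (fun k => ?_)).2
    · have hu : 2.43 / (1 + s ^ α) ≤ 4 * α / Real.pi ^ 2 *
          ((s * (((0 : ℕ) : ℝ) + 1)) ^ α / (1 + (s * (((0 : ℕ) : ℝ) + 1)) ^ α) ^ 2) := by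
        have e1 : (4.86 : ℝ) ≤ 4 * α / Real.pi ^ 2 := by
          rw [le_div_iff₀ (by positivity)]; nlinarith
        have e2 : 0.5 / (1 + s ^ α) ≤ s ^ α / (1 + s ^ α) ^ 2 := by
          rw [div_le_div_iff₀ (by positivity) (by positivity)]; nlinarith
        have e3 : s * (((0 : ℕ) : ℝ) + 1) = s := by simp
        rw [e3]
        calc 2.43 / (1 + s ^ α) = 4.86 * (0.5 / (1 + s ^ α)) := by ring
          _ ≤ _ := by gcongr
      have hv : 2 / (1 + s ^ α) + 1 / 64 / (1 + s ^ α) * (Real.pi ^ 2 / 6) ≤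
          2.43 / (1 + s ^ α) := by
        have : 2 / (1 + s ^ α) + 1 / 64 / (1 + s ^ α) * (Real.pi ^ 2 / 6)
          = (2 + Real.pi ^ 2 / 384) / (1 + s ^ α) := by ring
        rw [this]; gcongr; linarith
      simp only [Int.cast_zero]
      norm_num at *
      linarith
    · by_cases hk0 : k = 0
      · subst hk0
        simp
        positivity
      · rw [if_neg hk0]
        have hk2 : (2 : ℝ) ≤ (k : ℝ) + 1 := by
          have : 1 ≤ k := by omega
          have : (1 : ℝ) ≤ k := by exact_mod_cast this
          linarith
        set x := (k : ℝ) + 1 with hx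
        have hx0 : 0 < x := by linarith
        have h4 : 256 * x ^ 4 ≤ x ^ α := by
          calc 256 * x ^ 4 = 2 ^ 8 * x ^ 4 := by norm_num
            _ ≤ x ^ 8 * x ^ 4 := by gcongr
            _ = x ^ 12 := by ring
            _ ≤ x ^ α := pow_le_pow_right₀ (by linarith) hα12
        have e : 0 + 1 / 64 / (1 + s ^ α) * (1 / x ^ 2) = 1 / (64 * (1 + s ^ α) * x ^ 2) := by
          field_simp; ring
        rw [e, div_le_div_iff₀ (by positivity) (by positivity), mul_pow]
        have h5 : s ^ α * (256 * x ^ 4) ≤ s ^ α * x ^ α := by gcongr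
        have h6 : 1 * x ^ 4 ≤ s ^ α * x ^ 4 := by gcongr
        nlinarith
  · push_cast
    rw [hF, mul_pow]; ring
  · push_cast
    rw [hF, hα.neg_pow, mul_pow]; ring
  · have h0 : ((k : ℝ) + 1) ≠ 0 := by positivity
    push_cast
    exact u_term hα hα12 hF _ h0 (hsin k)
  · have h0 : ((k : ℝ) + 1) ≠ 0 := by positivity
    push_cast
    rw [u_term hα hα12 hF _ (neg_ne_zero.2 h0) (hsin' k), mul_neg, hα.neg_pow]
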